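/- arXiv:1305.6492 — 3 statements merged into one kernel-verified Lean document; each statement's English description precedes it below -/
import Mathlib

section
/- Assume additionally that im(F^i) = ker(H^{i+1}) for all i ∈ ℤ/4, and suppose that for every i ∈ ℤ/4 the homomorphism W^i ⊕ W^{i+2} → h^{ε(i)}(K,⋆), (w, w') ↦ F̄^i(w) + F̄^{i+2}(w'), is an isomorphism, where ε(i) = + for i even and ε(i) = − for i odd. Then for every i ∈ ℤ/4 the homomorphism h^{ε(i+1)}(K,⋆) → ker(F^i) ⊕ ker(F^{i+2}), z ↦ (H̄^i(z), H̄^{i+2}(z)), is an isomorphism. -/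
/-! Tate cohomology of an abelian group with involution. -/

def kerP {M : Type*} [AddCommGroup M] (f : M →+ M) : AddSubgroup M :=
  (AddMonoidHom.id M - f).ker

def kerM {M : Type*} [AddCommGroup M] (f : M →+ M) : AddSubgroup M :=
  (AddMonoidHom.id M + f).ker

def imP {M : Type*} [AddCommGroup M] (f : M →+ M) : AddSubgroup M :=
  (AddMonoidHom.id M + f).range

def imM {M : Type*} [AddCommGroup M] (f : M →+ M) : AddSubgroup M :=
  (AddMonoidHom.id M - f).range

abbrev hPlus {M : Type*} [AddCommGroup M] (f : M →+ M) :=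
  kerP f ⧸ (imP f).addSubgroupOf (kerP f)

abbrev hMinus {M : Type*} [AddCommGroup M] (f : M →+ M) :=
  kerM f ⧸ (imM f).addSubgroupOf (kerM f)

def hPlusMk {M : Type*} [AddCommGroup M] (f : M →+ M) (x : M) (hx : x ∈ kerP f) :
    hPlus f := QuotientAddGroup.mk ⟨x, hx⟩

def hMinusMk {M : Type*} [AddCommGroup M] (f : M →+ M) (x : M) (hx : x ∈ kerM f) :
    hMinus f := QuotientAddGroup.mk ⟨x, hx⟩

/-!
Exactness `im F = ker H` turns an element of `ker (H i) ∩ ker (H (i + 2))` into a common value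
`F (i - 1) a = F (i + 1) c`, so that `(a, -c)` represents an element of the kernel of the
isomorphism at `i - 1`; hence `a` is hyperbolic and the element is a boundary.

Conversely, let `(u, v) ∈ ker (F i) × ker (F (i + 2))`. By injectivity at `i`, `u = H i a` and
`v = H (i + 2) b` with cycles `a` and `b`, and by surjectivity at `i - 1` one can write
`a - b = F (i - 1) p + F (i + 1) q`. Then `a - F (i - 1) p = b + F (i + 1) q` maps to `(u, v)`.
-/

section WittSplitting

open Function

variable {K G G' : Type*} [AddCommGroup K] [AddCommGroup G] [AddCommGroup G']

/-- The homomorphism `G ⧸ N →+ Z ⧸ B` induced by `f : G →+ K`, for subgroups `Z` and `B` of `K`.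
It provides the maps `F̄ i` from the Witt groups to Tate cohomology; `B ≤ Z` is not required, as
the target is the quotient by `B ⊓ Z`. -/
def subquotientMap (f : G →+ K) (N : AddSubgroup G) (Z B : AddSubgroup K)
    (hZ : f.range ≤ Z) (hB : N.map f ≤ B) : G ⧸ N →+ Z ⧸ B.addSubgroupOf Z :=
  QuotientAddGroup.map N (B.addSubgroupOf Z) (f.codRestrict Z fun y => hZ ⟨y, rfl⟩)
    fun n hn => hB ⟨n, hn, rfl⟩

/-- An unfolded form of the bijectivity of `F̄ + F̄' : G ⧸ im h × G' ⧸ im h' → Z ⧸ B` for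
`B = im (f ∘ h)`. Elements of `B` come from `f`, so surjectivity may be stated in `Z` itself and
injectivity as a condition on the kernel of `f + f'`. -/
structure IsWittSplitting (f : G →+ K) (h : K →+ G) (f' : G' →+ K) (h' : K →+ G')
    (Z : AddSubgroup K) : Prop where
  ker_coprod_le : (f.coprod f').ker ≤ h.range.prod h'.range
  le_range_coprod : Z ≤ (f.coprod f').range

theorem subquotientMap_mk_add_mk {f : G →+ K} {f' : G' →+ K} {N : AddSubgroup G}
    {N' : AddSubgroup G'} {Z B : AddSubgroup K} (hZ : f.range ≤ Z) (hB : N.map f ≤ B)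
    (hZ' : f'.range ≤ Z) (hB' : N'.map f' ≤ B) (u : G) (v : G') :
    subquotientMap f N Z B hZ hB (u : G ⧸ N) + subquotientMap f' N' Z B hZ' hB' (v : G' ⧸ N') =
      QuotientAddGroup.mk ⟨f u + f' v, Z.add_mem (hZ ⟨u, rfl⟩) (hZ' ⟨v, rfl⟩)⟩ :=
  rfl

theorem ker_coprod_le_of_injective {f : G →+ K} {f' : G' →+ K} {N : AddSubgroup G}
    {N' : AddSubgroup G'} {Z B : AddSubgroup K} (hZ : f.range ≤ Z) (hB : N.map f ≤ B)
    (hZ' : f'.range ≤ Z) (hB' : N'.map f' ≤ B)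
    (hinj : Injective fun p : (G ⧸ N) × (G' ⧸ N') =>
      subquotientMap f N Z B hZ hB p.1 + subquotientMap f' N' Z B hZ' hB' p.2) :
    (f.coprod f').ker ≤ N.prod N' := by
  rintro ⟨u, v⟩ (huv : f u + f' v = 0)
  have hmk : ((u : G ⧸ N), (v : G' ⧸ N')) = 0 := hinj <| by
    simp only [subquotientMap_mk_add_mk, huv, Prod.fst_zero, Prod.snd_zero, map_zero, add_zero]
    rfl
  exact (Prod.mk_eq_zero.1 hmk).imp (QuotientAddGroup.eq_zero_iff u).1
    (QuotientAddGroup.eq_zero_iff v).1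

theorem le_range_coprod_sup_of_surjective {f : G →+ K} {f' : G' →+ K} {N : AddSubgroup G}
    {N' : AddSubgroup G'} {Z B : AddSubgroup K} (hZ : f.range ≤ Z) (hB : N.map f ≤ B)
    (hZ' : f'.range ≤ Z) (hB' : N'.map f' ≤ B)
    (hsurj : Surjective fun p : (G ⧸ N) × (G' ⧸ N') =>
      subquotientMap f N Z B hZ hB p.1 + subquotientMap f' N' Z B hZ' hB' p.2) :
    Z ≤ (f.coprod f').range ⊔ B := by
  intro x hx
  obtain ⟨⟨p, q⟩, hpq⟩ := hsurj (QuotientAddGroup.mk ⟨x, hx⟩)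
  obtain ⟨u, rfl⟩ := QuotientAddGroup.mk_surjective p
  obtain ⟨v, rfl⟩ := QuotientAddGroup.mk_surjective q
  have hdiff : -(f u + f' v) + x ∈ B :=
    (QuotientAddGroup.eq (s := B.addSubgroupOf Z)).1
      ((subquotientMap_mk_add_mk hZ hB hZ' hB' u v).symm.trans hpq)
  exact AddSubgroup.mem_sup.2 ⟨f u + f' v, ⟨(u, v), rfl⟩, _, hdiff, add_neg_cancel_left _ _⟩

theorem IsWittSplitting.of_bijective {f : G →+ K} {h : K →+ G} {f' : G' →+ K} {h' : K →+ G'}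
    {Z B : AddSubgroup K} (hZ : f.range ≤ Z) (hB : (f.comp h).range = B)
    (hZ' : f'.range ≤ Z) (hB' : (f'.comp h').range = B)
    (hbij : Bijective fun p : (G ⧸ h.range) × (G' ⧸ h'.range) =>
      subquotientMap f h.range Z B hZ ((f.map_range h).trans hB).le p.1 +
        subquotientMap f' h'.range Z B hZ' ((f'.map_range h').trans hB').le p.2) :
    IsWittSplitting f h f' h' Z where
  ker_coprod_le := ker_coprod_le_of_injective _ _ _ _ hbij.1
  le_range_coprod := by
    have hB_le : B ≤ (f.coprod f').range := by
      rintro _ hx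
      obtain ⟨k, rfl⟩ := hB ▸ hx
      exact ⟨(h k, 0), by simp⟩
    simpa only [sup_of_le_left hB_le] using le_range_coprod_sup_of_surjective _ _ _ _ hbij.2

theorem bijective_prodMk_of_subquotient {h : K →+ G} {h' : K →+ G'} {L : AddSubgroup G}
    {L' : AddSubgroup G'} {Z B : AddSubgroup K} (φ : Z ⧸ B.addSubgroupOf Z →+ L)
    (φ' : Z ⧸ B.addSubgroupOf Z →+ L')
    (hφ : ∀ x (hx : x ∈ Z), (φ (QuotientAddGroup.mk ⟨x, hx⟩) : G) = h x)
    (hφ' : ∀ x (hx : x ∈ Z), (φ' (QuotientAddGroup.mk ⟨x, hx⟩) : G') = h' x)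
    (hker : h.ker ⊓ h'.ker ≤ B) (hmap : L.prod L' ≤ Z.map (h.prod h')) :
    Bijective fun z => (φ z, φ' z) := by
  constructor
  · refine (injective_iff_map_eq_zero (φ.prod φ')).2 fun z hz => ?_
    obtain ⟨⟨x, hx⟩, rfl⟩ := QuotientAddGroup.mk_surjective z
    obtain ⟨hz₁, hz₂⟩ := Prod.mk_eq_zero.1 hz
    have hxh : h x = 0 := by rw [← hφ x hx, hz₁, ZeroMemClass.coe_zero]
    have hxh' : h' x = 0 := by rw [← hφ' x hx, hz₂, ZeroMemClass.coe_zero]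
    exact (QuotientAddGroup.eq_zero_iff _).2 (hker ⟨hxh, hxh'⟩)
  · rintro ⟨⟨u, hu⟩, ⟨v, hv⟩⟩
    obtain ⟨x, hx, hxuv⟩ := hmap (show (u, v) ∈ L.prod L' from ⟨hu, hv⟩)
    obtain ⟨rfl, rfl⟩ := Prod.mk.inj hxuv
    exact ⟨QuotientAddGroup.mk ⟨x, hx⟩, Prod.ext (Subtype.ext (hφ x hx)) (Subtype.ext (hφ' x hx))⟩

variable {G₀ G₁ G₂ G₃ : Type*} [AddCommGroup G₀] [AddCommGroup G₁] [AddCommGroup G₂]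
  [AddCommGroup G₃] {f₀ : G₀ →+ K} {h₀ : K →+ G₀} {f₁ : G₁ →+ K} {h₁ : K →+ G₁}
  {f₂ : G₂ →+ K} {h₂ : K →+ G₂} {f₃ : G₃ →+ K} {h₃ : K →+ G₃}

theorem ker_inf_ker_le_range_comp (he₁ : Exact f₀ h₁) (he₃ : Exact f₂ h₃)
    (hker : (f₀.coprod f₂).ker ≤ h₀.range.prod h₂.range) :
    h₁.ker ⊓ h₃.ker ≤ (f₀.comp h₀).range := by
  rintro x ⟨hx₁, hx₃⟩
  obtain ⟨a, rfl⟩ := (he₁ x).1 hx₁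
  obtain ⟨c, hc⟩ := (he₃ (f₀ a)).1 hx₃
  have hac : (a, -c) ∈ (f₀.coprod f₂).ker := by simp [AddMonoidHom.mem_ker, hc]
  obtain ⟨⟨k, rfl⟩, -⟩ := hker hac
  exact ⟨k, rfl⟩

theorem ker_prod_ker_le_map_prod (he₁ : Exact f₀ h₁) (he₃ : Exact f₂ h₃) {Z : AddSubgroup K}
    (hZ₁ : (f₁.comp h₁).ker ≤ Z) (hZ₃ : (f₃.comp h₃).ker ≤ Z) (hrange : Z ≤ (f₀.coprod f₂).range)
    (hker : (f₁.coprod f₃).ker ≤ h₁.range.prod h₃.range) :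
    f₁.ker.prod f₃.ker ≤ Z.map (h₁.prod h₃) := by
  rintro ⟨u, v⟩ ⟨hu : f₁ u = 0, hv : f₃ v = 0⟩
  have huv : (u, v) ∈ (f₁.coprod f₃).ker := by simp [AddMonoidHom.mem_ker, hu, hv]
  obtain ⟨⟨a, rfl⟩, ⟨b, rfl⟩⟩ := hker huv
  obtain ⟨⟨p, q⟩, hpq : f₀ p + f₂ q = a - b⟩ := hrange (Z.sub_mem (hZ₁ hu) (hZ₃ hv))
  have hglue : a - f₀ p = b + f₂ q := by
    rw [sub_eq_iff_eq_add, add_assoc, add_comm (f₂ q), hpq, add_sub_cancel]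
  have hp : f₀ p ∈ Z := hZ₁ (by simp [AddMonoidHom.mem_ker, he₁.apply_apply_eq_zero])
  refine ⟨a - f₀ p, Z.sub_mem (hZ₁ hu) hp, Prod.ext ?_ ?_⟩
  · simp [he₁.apply_apply_eq_zero]
  · simp [hglue, he₃.apply_apply_eq_zero]

theorem IsWittSplitting.bijective_prodMk {Z B : AddSubgroup K}
    (hs : IsWittSplitting f₀ h₀ f₂ h₂ Z)
    (hker : (f₁.coprod f₃).ker ≤ h₁.range.prod h₃.range)
    (he₁ : Exact f₀ h₁) (he₃ : Exact f₂ h₃) (hB : (f₀.comp h₀).range ≤ B)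
    (hZ₁ : (f₁.comp h₁).ker ≤ Z) (hZ₃ : (f₃.comp h₃).ker ≤ Z)
    (φ₁ : Z ⧸ B.addSubgroupOf Z →+ f₁.ker) (φ₃ : Z ⧸ B.addSubgroupOf Z →+ f₃.ker)
    (hφ₁ : ∀ x (hx : x ∈ Z), (φ₁ (QuotientAddGroup.mk ⟨x, hx⟩) : G₁) = h₁ x)
    (hφ₃ : ∀ x (hx : x ∈ Z), (φ₃ (QuotientAddGroup.mk ⟨x, hx⟩) : G₃) = h₃ x) :
    Bijective fun z => (φ₁ z, φ₃ z) :=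
  bijective_prodMk_of_subquotient φ₁ φ₃ hφ₁ hφ₃
    ((ker_inf_ker_le_range_comp he₁ he₃ hs.ker_coprod_le).trans hB)
    (ker_prod_ker_le_map_prod he₁ he₃ hZ₁ hZ₃ hs.le_range_coprod hker)

end WittSplitting

section Signs

variable {K G : Type*} [AddCommGroup K] [AddCommGroup G] {star : K →+ K} {f : G →+ K}
  {h : K →+ G} {n : ℕ}

theorem comp_eq_id_add_of_even (hfh : ∀ x, f (h x) = x + ((-1 : ℤ) ^ n) • star x) (hn : Even n) :
    f.comp h = .id K + star := by
  ext x
  simp [hfh, hn.neg_one_pow]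

theorem comp_eq_id_sub_of_odd (hfh : ∀ x, f (h x) = x + ((-1 : ℤ) ^ n) • star x) (hn : Odd n) :
    f.comp h = .id K - star := by
  ext x
  simp [hfh, hn.neg_one_pow, sub_eq_add_neg]

theorem range_le_kerP_of_even (hf : ∀ y, star (f y) = ((-1 : ℤ) ^ n) • f y) (hn : Even n) :
    f.range ≤ kerP star := by
  rintro _ ⟨y, rfl⟩
  simp [kerP, AddMonoidHom.mem_ker, hf, hn.neg_one_pow]

theorem range_le_kerM_of_odd (hf : ∀ y, star (f y) = ((-1 : ℤ) ^ n) • f y) (hn : Odd n) :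
    f.range ≤ kerM star := by
  rintro _ ⟨y, rfl⟩
  simp [kerM, AddMonoidHom.mem_ker, hf, hn.neg_one_pow]

end Signs

/-- In the setting of the K-group with involution and the forgetful/hyperbolic
maps, assume additionally `im (F i) = ker (H (i+1))` for all `i ∈ ℤ/4`, and suppose that for
every `i` the induced map `W i ⊕ W (i+2) → h^{ε(i)}(K,⋆)`, `(w,w') ↦ F̄ i w + F̄ (i+2) w'`
is an isomorphism (where `ε(i) = +` for `i` even and `−` for `i` odd).  Then for every `i`
the induced map `h^{ε(i+1)}(K,⋆) → ker (F i) ⊕ ker (F (i+2))`, `z ↦ (H̄ i z, H̄ (i+2) z)`,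
is an isomorphism. -/
theorem statement1
    {K : Type*} [AddCommGroup K] (star : K →+ K) (hstar : ∀ x, star (star x) = x)
    (GW : ZMod 4 → Type*) [∀ i, AddCommGroup (GW i)]
    (F : ∀ i, GW i →+ K) (H : ∀ i, K →+ GW i)
    (hH : ∀ i (x : K), H i (star x) = ((-1 : ℤ) ^ i.val) • H i x)
    (hFH : ∀ i (x : K), F i (H i x) = x + ((-1 : ℤ) ^ i.val) • star x)
    (hsF : ∀ i (y : GW i), star (F i y) = ((-1 : ℤ) ^ i.val) • F i y)
    (hrange : ∀ i, (F i).range = (H (i + 1)).ker)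
    -- hypothesis: `(F̄ i, F̄ (i+2)) : W i ⊕ W (i+2) → h^{ε(i)}(K,⋆)` is an isomorphism
    (hFisoEven : ∀ i : ZMod 4, Even i.val →
      ∀ (F1 : GW i ⧸ (H i).range →+ hPlus star)
        (F2 : GW (i + 2) ⧸ (H (i + 2)).range →+ hPlus star),
        (∀ (y : GW i) (hy : F i y ∈ kerP star),
            F1 (QuotientAddGroup.mk y) = hPlusMk star (F i y) hy) →
        (∀ (y : GW (i + 2)) (hy : F (i + 2) y ∈ kerP star),
            F2 (QuotientAddGroup.mk y) = hPlusMk star (F (i + 2) y) hy) →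
        Function.Bijective
          (fun p : (GW i ⧸ (H i).range) × (GW (i + 2) ⧸ (H (i + 2)).range) =>
            F1 p.1 + F2 p.2))
    (hFisoOdd : ∀ i : ZMod 4, Odd i.val →
      ∀ (F1 : GW i ⧸ (H i).range →+ hMinus star)
        (F2 : GW (i + 2) ⧸ (H (i + 2)).range →+ hMinus star),
        (∀ (y : GW i) (hy : F i y ∈ kerM star),
            F1 (QuotientAddGroup.mk y) = hMinusMk star (F i y) hy) →
        (∀ (y : GW (i + 2)) (hy : F (i + 2) y ∈ kerM star),
            F2 (QuotientAddGroup.mk y) = hMinusMk star (F (i + 2) y) hy) →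
        Function.Bijective
          (fun p : (GW i ⧸ (H i).range) × (GW (i + 2) ⧸ (H (i + 2)).range) =>
            F1 p.1 + F2 p.2)) :
    -- conclusion: `(H̄ i, H̄ (i+2)) : h^{ε(i+1)}(K,⋆) → ker (F i) ⊕ ker (F (i+2))`
    -- is an isomorphism
    (∀ i : ZMod 4, Even i.val →
      ∀ (H1 : hMinus star →+ (F i).ker) (H2 : hMinus star →+ (F (i + 2)).ker),
        (∀ (x : K) (hx : x ∈ kerM star), ((H1 (hMinusMk star x hx) : GW i) = H i x)) →
        (∀ (x : K) (hx : x ∈ kerM star),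
            ((H2 (hMinusMk star x hx) : GW (i + 2)) = H (i + 2) x)) →
        Function.Bijective (fun z : hMinus star => (H1 z, H2 z))) ∧
    (∀ i : ZMod 4, Odd i.val →
      ∀ (H1 : hPlus star →+ (F i).ker) (H2 : hPlus star →+ (F (i + 2)).ker),
        (∀ (x : K) (hx : x ∈ kerP star), ((H1 (hPlusMk star x hx) : GW i) = H i x)) →
        (∀ (x : K) (hx : x ∈ kerP star),
            ((H2 (hPlusMk star x hx) : GW (i + 2)) = H (i + 2) x)) →
        Function.Bijective (fun z : hPlus star => (H1 z, H2 z))) := by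
  have even_shift : ∀ i : ZMod 4, Even i.val → Even (i + 2).val ∧ Odd (i - 1).val := by decide
  have odd_shift : ∀ i : ZMod 4, Odd i.val → Odd (i + 2).val ∧ Even (i - 1).val := by decide
  have exact_succ (j k) (hjk : j + 1 = k) : Function.Exact (F j) (H k) :=
    AddMonoidHom.exact_iff.2 (hjk ▸ (hrange j).symm)
  have comp_even (i) (hi : Even i.val) := comp_eq_id_add_of_even (hFH i) hi
  have comp_odd (i) (hi : Odd i.val) := comp_eq_id_sub_of_odd (hFH i) hi
  have split_even (i) (hi : Even i.val) : IsWittSplitting (F i) (H i) _ _ (kerP star) :=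
    .of_bijective (range_le_kerP_of_even (hsF i) hi) (congrArg _ (comp_even i hi))
      (range_le_kerP_of_even (hsF _) (even_shift i hi).1)
      (congrArg _ (comp_even _ (even_shift i hi).1))
      (hFisoEven i hi _ _ (fun _ _ => rfl) fun _ _ => rfl)
  have split_odd (i) (hi : Odd i.val) : IsWittSplitting (F i) (H i) _ _ (kerM star) :=
    .of_bijective (range_le_kerM_of_odd (hsF i) hi) (congrArg _ (comp_odd i hi))
      (range_le_kerM_of_odd (hsF _) (odd_shift i hi).1)
      (congrArg _ (comp_odd _ (odd_shift i hi).1))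
      (hFisoOdd i hi _ _ (fun _ _ => rfl) fun _ _ => rfl)
  refine ⟨fun i hi => ?_, fun i hi => ?_⟩
  · obtain ⟨hi₂, hi₁⟩ := even_shift i hi
    exact (split_odd (i - 1) hi₁).bijective_prodMk (split_even i hi).ker_coprod_le
      (exact_succ _ _ (by ring)) (exact_succ _ _ (by ring)) (congrArg _ (comp_odd _ hi₁)).le
      (congrArg _ (comp_even i hi)).le (congrArg _ (comp_even _ hi₂)).le
  · obtain ⟨hi₂, hi₁⟩ := odd_shift i hi
    exact (split_even (i - 1) hi₁).bijective_prodMk (split_odd i hi).ker_coprod_le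
      (exact_succ _ _ (by ring)) (exact_succ _ _ (by ring)) (congrArg _ (comp_even _ hi₁)).le
      (congrArg _ (comp_odd i hi)).le (congrArg _ (comp_odd _ hi₂)).le
end

section
/- Let 0 → M' →ι M →p M'' → 0 be a short exact sequence of abelian groups equipped with additive involutions ⋆, such that ι and p commute with the involutions. Then: (1) for every m ∈ M with p(m)⋆ = p(m) there is a unique m' ∈ M' with ι(m') = m − m⋆; this m' satisfies m'⋆ = −m', and its class in h⁻(M',⋆) depends only on the class of p(m) in h⁺(M'',⋆), giving a well-defined homomorphism ∂ : h⁺(M'',⋆) → h⁻(M',⋆); symmetrically, m ↦ m + m⋆ gives a well-defined homomorphism ∂ : h⁻(M'',⋆) → h⁺(M',⋆). (2) The resulting six-term sequence h⁺(M') → h⁺(M) → h⁺(M'') →∂ h⁻(M') → h⁻(M) → h⁻(M'') →∂ h⁺(M'), in which the first two maps of each triple are induced by ι and p, is exact at every term. -/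
/-! Put `d = id - ⋆` and `e = id + ⋆`. Since `⋆` is an involution, `d ∘ e = 0 = e ∘ d`, so every
group with involution is a two-periodic complex `⋯ →d M →e M →d M →e ⋯` with homology
`h⁺ = ker d / im e` and `h⁻ = ker e / im d`. A short exact sequence of such complexes has a long
exact homology sequence, with connecting map `[p m] ↦ [ι⁻¹ (d m)]`. Exchanging `d` and `e` exchanges
`h⁺` and `h⁻`, so exactness at three consecutive terms gives exactness at all six. -/

/-- The homology `ker d / im e` of the two-periodic complex `⋯ →d M →e M →d M →e ⋯`. The relation
`d ∘ e = 0` is not part of the definition: in general one divides by `im e ∩ ker d`. -/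
abbrev PeriodicHomology {M : Type*} [AddCommGroup M] (d e : M →+ M) :=
  d.ker ⧸ e.range.addSubgroupOf d.ker

namespace PeriodicHomology

variable {M N : Type*} [AddCommGroup M] [AddCommGroup N] {d e : M →+ M} {dN eN : N →+ N}

/-- The homology class of a cycle, as a homomorphism. -/
def π (d e : M →+ M) : d.ker →+ PeriodicHomology d e :=
  QuotientAddGroup.mk' _

theorem π_surjective : Function.Surjective (π d e) :=
  QuotientAddGroup.mk'_surjective _

theorem π_eq_zero_iff {x : M} {hx : x ∈ d.ker} : π d e ⟨x, hx⟩ = 0 ↔ x ∈ e.range :=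
  QuotientAddGroup.eq_zero_iff _

theorem π_eq_π_iff {x y : M} {hx : x ∈ d.ker} {hy : y ∈ d.ker} :
    π d e ⟨x, hx⟩ = π d e ⟨y, hy⟩ ↔ x - y ∈ e.range := by
  rw [← sub_eq_zero, ← map_sub]
  exact π_eq_zero_iff

theorem map_mem_ker {f : M →+ N} (hd : Function.Semiconj f d dN) {x : M} (hx : x ∈ d.ker) :
    f x ∈ dN.ker := by
  rw [AddMonoidHom.mem_ker, ← hd.eq, AddMonoidHom.mem_ker.1 hx, map_zero]

theorem mem_ker_of_map_mem_ker {f : M →+ N} (hf : Function.Injective f)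
    (hd : Function.Semiconj f d dN) {x : M} (hx : f x ∈ dN.ker) : x ∈ d.ker :=
  hf (by rw [hd.eq, AddMonoidHom.mem_ker.1 hx, map_zero])

/-- The homomorphism on homology induced by a morphism of two-periodic complexes. -/
def map (f : M →+ N) (hd : Function.Semiconj f d dN) (he : Function.Semiconj f e eN) :
    PeriodicHomology d e →+ PeriodicHomology dN eN :=
  QuotientAddGroup.map _ _
    ((f.comp d.ker.subtype).codRestrict dN.ker fun x => map_mem_ker hd x.2) <| by
      rintro x ⟨n, hn⟩
      exact ⟨f n, (he.eq n).symm.trans (congrArg f hn)⟩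

theorem map_π (f : M →+ N) (hd : Function.Semiconj f d dN) (he : Function.Semiconj f e eN)
    {x : M} (hx : x ∈ d.ker) :
    map f hd he (π d e ⟨x, hx⟩) = π dN eN ⟨f x, map_mem_ker hd hx⟩ :=
  rfl

/-- The class of `f x` in `ker dN / im eN`, for `x` in `f⁻¹(ker dN)`; such an `x` need not be a
cycle itself. -/
def imageClass (f : M →+ N) (dN eN : N →+ N) : dN.ker.comap f →+ PeriodicHomology dN eN :=
  (π dN eN).comp (f.addSubgroupComap dN.ker)

theorem imageClass_surjective {f : M →+ N} (hf : Function.Surjective f) :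
    Function.Surjective (imageClass f dN eN) :=
  π_surjective.comp (f.addSubgroupComap_surjective_of_surjective dN.ker hf)

end PeriodicHomology

/-- A short exact sequence `0 → M' →ι M →p M'' → 0` of two-periodic complexes. The relations
`d ∘ e = 0` and `e ∘ d = 0` are only imposed on `M`, as they pass to subobjects and quotients. -/
structure PeriodicShortExact {M' M M'' : Type*} [AddCommGroup M'] [AddCommGroup M]
    [AddCommGroup M''] (ι : M' →+ M) (p : M →+ M'') (d' e' : M' →+ M') (d e : M →+ M)
    (d'' e'' : M'' →+ M'') : Prop where
  injective : Function.Injective ι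
  surjective : Function.Surjective p
  exact : Function.Exact ι p
  d_e : ∀ x, d (e x) = 0
  e_d : ∀ x, e (d x) = 0
  ι_d : Function.Semiconj ι d' d
  ι_e : Function.Semiconj ι e' e
  p_d : Function.Semiconj p d d''
  p_e : Function.Semiconj p e e''

namespace PeriodicShortExact

open PeriodicHomology

variable {M' M M'' : Type*} [AddCommGroup M'] [AddCommGroup M] [AddCommGroup M'']
  {ι : M' →+ M} {p : M →+ M''} {d' e' : M' →+ M'} {d e : M →+ M} {d'' e'' : M'' →+ M''}

theorem swap (S : PeriodicShortExact ι p d' e' d e d'' e'') :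
    PeriodicShortExact ι p e' d' e d e'' d'' :=
  ⟨S.injective, S.surjective, S.exact, S.e_d, S.d_e, S.ι_e, S.ι_d, S.p_e, S.p_d⟩

theorem d_mem_range (S : PeriodicShortExact ι p d' e' d e d'' e'') {m : M}
    (hm : p m ∈ d''.ker) : d m ∈ ι.range :=
  (S.exact _).1 ((S.p_d.eq m).trans hm)

theorem existsUnique_eq_d (S : PeriodicShortExact ι p d' e' d e d'' e'') {m : M}
    (hm : p m ∈ d''.ker) : ∃! m', ι m' = d m :=
  S.injective.existsUnique_of_mem_range (S.d_mem_range hm)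

theorem mem_ker_of_eq_d (S : PeriodicShortExact ι p d' e' d e d'' e'') {m : M} {m' : M'}
    (h : ι m' = d m) : m' ∈ e'.ker :=
  mem_ker_of_map_mem_ker S.injective S.ι_e (by rw [h, AddMonoidHom.mem_ker, S.e_d])

theorem exists_eq_sub_of_map_mem_range (S : PeriodicShortExact ι p d' e' d e d'' e'') {m : M}
    (hm : p m ∈ e''.range) : ∃ m' k, ι m' = m - e k := by
  obtain ⟨n, hn⟩ := hm
  obtain ⟨k, rfl⟩ := S.surjective n
  obtain ⟨m', hm'⟩ := (S.exact (m - e k)).1 (by rw [map_sub, S.p_e.eq, hn, sub_self])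
  exact ⟨m', k, hm'⟩

theorem exact_map_map (S : PeriodicShortExact ι p d' e' d e d'' e'') :
    Function.Exact (map ι S.ι_d S.ι_e) (map p S.p_d S.p_e) := by
  intro z
  constructor
  · obtain ⟨⟨x, hx⟩, rfl⟩ := π_surjective z
    intro hz
    rw [map_π, π_eq_zero_iff] at hz
    obtain ⟨m', k, hm'⟩ := S.exists_eq_sub_of_map_mem_range hz
    have hιm' : ι m' ∈ d.ker := by
      rw [hm', AddMonoidHom.mem_ker, map_sub, S.d_e, AddMonoidHom.mem_ker.1 hx, sub_zero]
    refine ⟨π d' e' ⟨m', mem_ker_of_map_mem_ker S.injective S.ι_d hιm'⟩, ?_⟩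
    rw [map_π, π_eq_π_iff]
    exact ⟨-k, by rw [map_neg, hm', sub_sub_cancel_left]⟩
  · rintro ⟨w, rfl⟩
    obtain ⟨⟨x, hx⟩, rfl⟩ := π_surjective w
    exact π_eq_zero_iff.2 ⟨0, (map_zero e'').trans (S.exact.apply_apply_eq_zero x).symm⟩

/-- The map `m ↦ ι⁻¹ (d m)` from `p⁻¹(ker d'')` to `M'`. -/
noncomputable def preimageD (S : PeriodicShortExact ι p d' e' d e d'' e'') :
    d''.ker.comap p →+ M' :=
  (AddMonoidHom.ofInjective S.injective).symm.toAddMonoidHom.comp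
    ((d.comp (d''.ker.comap p).subtype).codRestrict ι.range fun m => S.d_mem_range m.2)

theorem ι_preimageD (S : PeriodicShortExact ι p d' e' d e d'' e'') (m : d''.ker.comap p) :
    ι (S.preimageD m) = d m :=
  AddMonoidHom.apply_ofInjective_symm S.injective _

/-- The class in `ker e' / im d'` of `ι⁻¹ (d m)`, for `m` in `p⁻¹(ker d'')`. -/
noncomputable def boundaryClass (S : PeriodicShortExact ι p d' e' d e d'' e'') :
    d''.ker.comap p →+ PeriodicHomology e' d' :=
  (π e' d').comp (S.preimageD.codRestrict e'.ker fun m => S.mem_ker_of_eq_d (S.ι_preimageD m))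

theorem ker_imageClass_le_ker_boundaryClass (S : PeriodicShortExact ι p d' e' d e d'' e'') :
    (imageClass p d'' e'').ker ≤ S.boundaryClass.ker := by
  intro m hm
  obtain ⟨m', k, hm'⟩ := S.exists_eq_sub_of_map_mem_range (π_eq_zero_iff.1 hm)
  refine π_eq_zero_iff.2 ⟨m', S.injective ?_⟩
  calc
    ι (d' m') = d (m - e k) := by rw [S.ι_d.eq, hm']
    _ = d m := by rw [map_sub, S.d_e, sub_zero]
    _ = ι (S.preimageD m) := (S.ι_preimageD m).symm

/-- The connecting homomorphism `[p m] ↦ [ι⁻¹ (d m)]`. -/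
noncomputable def δ (S : PeriodicShortExact ι p d' e' d e d'' e'') :
    PeriodicHomology d'' e'' →+ PeriodicHomology e' d' :=
  (imageClass p d'' e'').liftOfSurjective (imageClass_surjective S.surjective)
    ⟨S.boundaryClass, S.ker_imageClass_le_ker_boundaryClass⟩

theorem δ_π (S : PeriodicShortExact ι p d' e' d e d'' e'') {m : M} (hm : p m ∈ d''.ker)
    {m' : M'} (h : ι m' = d m) :
    S.δ (π d'' e'' ⟨p m, hm⟩) = π e' d' ⟨m', S.mem_ker_of_eq_d h⟩ := by
  have hδ : S.δ (π d'' e'' ⟨p m, hm⟩) = S.boundaryClass ⟨m, hm⟩ :=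
    (imageClass p d'' e'').liftOfRightInverse_comp_apply _ _ _ ⟨m, hm⟩
  have hm' : S.preimageD ⟨m, hm⟩ = m' := S.injective ((S.ι_preimageD _).trans h.symm)
  exact hδ.trans (congrArg (π e' d') (Subtype.ext hm'))

theorem exact_map_δ (S : PeriodicShortExact ι p d' e' d e d'' e'') :
    Function.Exact (map p S.p_d S.p_e) S.δ := by
  intro z
  constructor
  · obtain ⟨⟨x, hx⟩, rfl⟩ := π_surjective z
    obtain ⟨m, rfl⟩ := S.surjective x
    obtain ⟨m', hm'⟩ := S.d_mem_range hx
    intro hz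
    rw [S.δ_π hx hm', π_eq_zero_iff] at hz
    obtain ⟨n, rfl⟩ : ∃ n, d' n = m' := hz
    have hcycle : m - ι n ∈ d.ker := by
      rw [AddMonoidHom.mem_ker, map_sub, ← hm', S.ι_d.eq, sub_self]
    have hp : p (m - ι n) = p m := by
      rw [map_sub, S.exact.apply_apply_eq_zero, sub_zero]
    exact ⟨π d e ⟨m - ι n, hcycle⟩, congrArg (π d'' e'') (Subtype.ext hp)⟩
  · rintro ⟨w, rfl⟩
    obtain ⟨⟨x, hx⟩, rfl⟩ := π_surjective w
    have hdx : ι 0 = d x := by rw [map_zero, AddMonoidHom.mem_ker.1 hx]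
    rw [map_π, S.δ_π _ hdx, π_eq_zero_iff]
    exact zero_mem _

theorem exact_δ_map (S : PeriodicShortExact ι p d' e' d e d'' e'') :
    Function.Exact S.δ (map ι S.ι_e S.ι_d) := by
  intro z
  constructor
  · obtain ⟨⟨x, hx⟩, rfl⟩ := π_surjective z
    intro hz
    obtain ⟨m, hm⟩ : ∃ m, d m = ι x := π_eq_zero_iff.1 hz
    have hpm : p m ∈ d''.ker := by
      rw [AddMonoidHom.mem_ker, ← S.p_d.eq, hm, S.exact.apply_apply_eq_zero]
    exact ⟨π d'' e'' ⟨p m, hpm⟩, S.δ_π hpm hm.symm⟩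
  · rintro ⟨w, rfl⟩
    obtain ⟨⟨x, hx⟩, rfl⟩ := π_surjective w
    obtain ⟨m, rfl⟩ := S.surjective x
    obtain ⟨m', hm'⟩ := S.d_mem_range hx
    rw [S.δ_π hx hm', map_π, π_eq_zero_iff]
    exact ⟨m, hm'.symm⟩

theorem of_involutive {τ' : M' →+ M'} {τ : M →+ M} {τ'' : M'' →+ M''}
    (hτ : Function.Involutive τ) (hinj : Function.Injective ι) (hsurj : Function.Surjective p)
    (hexact : Function.Exact ι p) (hι : Function.Semiconj ι τ' τ)
    (hp : Function.Semiconj p τ τ'') :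
    PeriodicShortExact ι p (.id M' - τ') (.id M' + τ') (.id M - τ) (.id M + τ)
      (.id M'' - τ'') (.id M'' + τ'') where
  injective := hinj
  surjective := hsurj
  exact := hexact
  d_e x := by simp [hτ x, add_comm]
  e_d x := by simp [hτ x]
  ι_d x := by simp [hι.eq]
  ι_e x := by simp [hι.eq]
  p_d x := by simp [hp.eq]
  p_e x := by simp [hp.eq]

end PeriodicShortExact

section Involution

variable {M : Type*} [AddCommGroup M] {τ : M →+ M} {x : M}

theorem mem_kerP_iff : x ∈ kerP τ ↔ τ x = x :=
  sub_eq_zero.trans eq_comm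

theorem mem_kerM_iff : x ∈ kerM τ ↔ τ x = -x :=
  add_eq_zero_iff_neg_eq.trans eq_comm

end Involution

/-- Let `0 → M' →ι M →p M'' → 0` be a short exact sequence of abelian
groups with additive involutions, `ι` and `p` commuting with the involutions.  Then:
(1) for every `m ∈ M` with `p m` self-dual there is a unique `m' ∈ M'` with
`ι m' = m - m⋆`; it is anti-self-dual, and `[p m] ↦ [m']` is a well-defined boundary map
`∂ : h⁺(M'') →+ h⁻(M')`; symmetrically `m ↦ m + m⋆` yields `∂ : h⁻(M'') →+ h⁺(M')`.
(2) The six-term sequence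
`h⁺(M') → h⁺(M) → h⁺(M'') →∂ h⁻(M') → h⁻(M) → h⁻(M'') →∂ h⁺(M')` is exact everywhere. -/
theorem statement3
    {M' M M'' : Type*} [AddCommGroup M'] [AddCommGroup M] [AddCommGroup M'']
    (τ' : M' →+ M') (τ : M →+ M) (τ'' : M'' →+ M'')
    (hτ' : ∀ x, τ' (τ' x) = x) (hτ : ∀ x, τ (τ x) = x) (hτ'' : ∀ x, τ'' (τ'' x) = x)
    (ι : M' →+ M) (p : M →+ M'')
    (hinj : Function.Injective ι) (hsurj : Function.Surjective p)
    (hexact : ι.range = p.ker)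
    (hcι : ∀ x, ι (τ' x) = τ (ι x)) (hcp : ∀ x, p (τ x) = τ'' (p x)) :
    -- (1) existence, uniqueness and anti-self-duality of the lift `m'`
    (∀ m : M, τ'' (p m) = p m →
      (∃! m' : M', ι m' = m - τ m) ∧ (∀ m' : M', ι m' = m - τ m → τ' m' = -m')) ∧
    (∀ m : M, τ'' (p m) = -(p m) →
      (∃! m' : M', ι m' = m + τ m) ∧ (∀ m' : M', ι m' = m + τ m → τ' m' = m')) ∧
    -- well-defined induced maps and boundary maps, and (2) exactness of the six-term sequence
    ∃ (iP : hPlus τ' →+ hPlus τ) (pP : hPlus τ →+ hPlus τ'') (dP : hPlus τ'' →+ hMinus τ')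
      (iM : hMinus τ' →+ hMinus τ) (pM : hMinus τ →+ hMinus τ'')
      (dM : hMinus τ'' →+ hPlus τ'),
      (∀ (x : M') (hx : x ∈ kerP τ') (hx' : ι x ∈ kerP τ),
          iP (hPlusMk τ' x hx) = hPlusMk τ (ι x) hx') ∧
      (∀ (x : M) (hx : x ∈ kerP τ) (hx' : p x ∈ kerP τ''),
          pP (hPlusMk τ x hx) = hPlusMk τ'' (p x) hx') ∧
      (∀ (m : M) (h : p m ∈ kerP τ'') (m' : M') (hm' : ι m' = m - τ m)
          (h' : m' ∈ kerM τ'),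
          dP (hPlusMk τ'' (p m) h) = hMinusMk τ' m' h') ∧
      (∀ (x : M') (hx : x ∈ kerM τ') (hx' : ι x ∈ kerM τ),
          iM (hMinusMk τ' x hx) = hMinusMk τ (ι x) hx') ∧
      (∀ (x : M) (hx : x ∈ kerM τ) (hx' : p x ∈ kerM τ''),
          pM (hMinusMk τ x hx) = hMinusMk τ'' (p x) hx') ∧
      (∀ (m : M) (h : p m ∈ kerM τ'') (m' : M') (hm' : ι m' = m + τ m)
          (h' : m' ∈ kerP τ'),
          dM (hMinusMk τ'' (p m) h) = hPlusMk τ' m' h') ∧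
      iP.range = pP.ker ∧ pP.range = dP.ker ∧ dP.range = iM.ker ∧
      iM.range = pM.ker ∧ pM.range = dM.ker ∧ dM.range = iP.ker := by
  have S := PeriodicShortExact.of_involutive hτ hinj hsurj
    (AddMonoidHom.exact_iff.2 hexact.symm) hcι hcp
  refine ⟨fun m hm => ⟨S.existsUnique_eq_d (mem_kerP_iff.2 hm),
      fun m' h => mem_kerM_iff.1 (S.mem_ker_of_eq_d h)⟩,
    fun m hm => ⟨S.swap.existsUnique_eq_d (mem_kerM_iff.2 hm),
      fun m' h => mem_kerP_iff.1 (S.swap.mem_ker_of_eq_d h)⟩,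
    PeriodicHomology.map ι S.ι_d S.ι_e, PeriodicHomology.map p S.p_d S.p_e, S.δ,
    PeriodicHomology.map ι S.ι_e S.ι_d, PeriodicHomology.map p S.p_e S.p_d, S.swap.δ,
    fun _ _ _ => rfl, fun _ _ _ => rfl, fun _ hm _ h _ => S.δ_π hm h,
    fun _ _ _ => rfl, fun _ _ _ => rfl, fun _ hm _ h _ => S.swap.δ_π hm h, ?_⟩
  exact ⟨S.exact_map_map.addMonoidHom_ker_eq.symm, S.exact_map_δ.addMonoidHom_ker_eq.symm,
    S.exact_δ_map.addMonoidHom_ker_eq.symm, S.swap.exact_map_map.addMonoidHom_ker_eq.symm,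
    S.swap.exact_map_δ.addMonoidHom_ker_eq.symm, S.swap.exact_δ_map.addMonoidHom_ker_eq.symm⟩
end

section
/- For every t ∈ ℤ^K, the twisted Tate cohomology h⁺(A, x^t) ⊕ h⁻(A, x^t) of the twisted polynomial ring (A,⋆) is non-zero if and only if the mod-2 reduction t̄ ∈ (ℤ/2)^K lies in the 𝔽₂-linear span of the reductions m̄ʲ (j ∈ J) of the twist vectors of the self-dual generators μ_j. -/
/-! ### The twisted polynomial ring and its duality involution -/

abbrev TwGens (I J : Type) := (I × Bool) ⊕ J
abbrev TwMon (I J K : Type) := (TwGens I J → ℕ) × (K → ℤ)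
abbrev TwPolyRing (I J K : Type) := AddMonoidAlgebra ℤ (TwMon I J K)

variable {I J K : Type}

def twSwap : TwGens I J → TwGens I J
  | Sum.inl (i, b) => Sum.inl (i, !b)
  | Sum.inr j => Sum.inr j

def twTwist [Fintype I] [Fintype J] (c : I → K → ℤ) (m : J → K → ℤ)
    (f : TwGens I J → ℕ) : K → ℤ :=
  fun k => (∑ i : I, ((f (Sum.inl (i, false)) : ℤ) + (f (Sum.inl (i, true)) : ℤ)) * c i k)
    + ∑ j : J, (f (Sum.inr j) : ℤ) * m j k

lemma twTwist_add [Fintype I] [Fintype J] (c : I → K → ℤ) (m : J → K → ℤ)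
    (f f' : TwGens I J → ℕ) :
    twTwist c m (f + f') = twTwist c m f + twTwist c m f' := by
  funext k
  simp only [twTwist, Pi.add_apply, Nat.cast_add, add_mul, Finset.sum_add_distrib]
  ring

lemma twTwist_zero [Fintype I] [Fintype J] (c : I → K → ℤ) (m : J → K → ℤ) :
    twTwist c m (0 : TwGens I J → ℕ) = 0 := by
  funext k
  simp [twTwist]

def twStarMon [Fintype I] [Fintype J] (c : I → K → ℤ) (m : J → K → ℤ) :
    TwMon I J K →+ TwMon I J K where
  toFun := fun fg => (fg.1 ∘ twSwap, -fg.2 + twTwist c m fg.1)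
  map_zero' := by
    refine Prod.ext rfl ?_
    simp [twTwist_zero]
  map_add' := by
    rintro ⟨f, g⟩ ⟨f', g'⟩
    refine Prod.ext rfl ?_
    show -(g + g') + twTwist c m (f + f') = (-g + twTwist c m f) + (-g' + twTwist c m f')
    rw [twTwist_add]
    abel

noncomputable def twStar [Fintype I] [Fintype J] (c : I → K → ℤ) (m : J → K → ℤ) :
    TwPolyRing I J K →+* TwPolyRing I J K :=
  AddMonoidAlgebra.mapDomainRingHom ℤ (twStarMon c m)

noncomputable def twX (t : K → ℤ) : TwPolyRing I J K :=
  AddMonoidAlgebra.single ((0 : TwGens I J → ℕ), t) 1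

noncomputable def twStarT [Fintype I] [Fintype J] (c : I → K → ℤ) (m : J → K → ℤ)
    (t : K → ℤ) : TwPolyRing I J K →+ TwPolyRing I J K :=
  (AddMonoidHom.mulRight (twX t)).comp (twStar c m).toAddMonoidHom

/-!
Right multiplication by `x^t` after `⋆` permutes the monomial `ℤ`-basis of `A` by an involution.
For an involution `s` of a basis, an invariant element with no coefficients at fixed points of `s`
is a norm: keep only the coefficients on a set containing exactly one point of each free orbit.
Hence free orbits contribute nothing, while each fixed monomial contributes a factor `ℤ/2` to `h⁺`
and nothing to `h⁻` (as `2a = 0` forces `a = 0`). Finally, a monomial `γ^p γ'^p' μ^q x^g` is fixed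
iff `p = p'` and `2g = 2 ∑ p_i cⁱ + ∑ q_j mʲ + t`, which is solvable in `g` iff
`t̄ = ∑ q̄_j m̄ʲ`.
-/

section TateCohomology

variable {M : Type*} [AddCommGroup M] (f : M →+ M)

lemma mem_kerP {f : M →+ M} {a : M} : a ∈ kerP f ↔ f a = a := by
  rw [kerP, AddMonoidHom.mem_ker, AddMonoidHom.sub_apply, AddMonoidHom.id_apply, sub_eq_zero,
    eq_comm]

lemma kerP_neg : kerP (-f) = kerM f := by
  simp only [kerP, kerM, sub_neg_eq_add]

lemma imP_neg : imP (-f) = imM f := by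
  simp only [imP, imM, ← sub_eq_add_neg]

lemma subsingleton_hPlus_iff : Subsingleton (hPlus f) ↔ kerP f ≤ imP f :=
  QuotientAddGroup.subsingleton_iff.trans AddSubgroup.addSubgroupOf_eq_top

lemma subsingleton_hMinus_iff : Subsingleton (hMinus f) ↔ kerM f ≤ imM f :=
  QuotientAddGroup.subsingleton_iff.trans AddSubgroup.addSubgroupOf_eq_top

end TateCohomology

section PermutationModule

open Function

lemma exists_set_apply_mem_iff_notMem {X : Type*} {s : X → X} (hs : Involutive s) :
    ∃ S : Set X, ∀ x, ¬ IsFixedPt s x → (s x ∈ S ↔ x ∉ S) := by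
  classical
  let := linearOrderOfSTO (WellOrderingRel (α := X))
  refine ⟨{x | x < s x}, fun x hx ↦ ?_⟩
  simp only [Set.mem_ofPred_eq, hs x, not_lt]
  exact ⟨le_of_lt, fun h ↦ lt_of_le_of_ne h hx⟩

variable {X M G : Type*} [AddCommGroup M] [AddCommGroup G] {e : M ≃+ (X →₀ G)} {s : X → X}
  {f : M →+ M}

-- The cases `φ = id` and `φ = -id` treat `h⁺` and `h⁻ f = h⁺ (-f)` simultaneously.
lemma mem_imP_of_coord_eq_zero_of_isFixedPt (hs : Involutive s) {φ : G →+ G}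
    (hf : ∀ a x, e (f a) x = φ (e a (s x))) {a : M} (ha : f a = a)
    (hfix : ∀ x, IsFixedPt s x → e a x = 0) : a ∈ imP f := by
  classical
  obtain ⟨S, hS⟩ := exists_set_apply_mem_iff_notMem hs
  have coord_eq (x : X) : φ (e a (s x)) = e a x := by rw [← hf, ha]
  refine ⟨e.symm ((e a).filter (· ∈ S)), e.injective (Finsupp.ext fun x ↦ ?_)⟩
  simp only [AddMonoidHom.add_apply, AddMonoidHom.id_apply, map_add, Finsupp.add_apply, hf,
    AddEquiv.apply_symm_apply, Finsupp.filter_apply]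
  by_cases hx : IsFixedPt s x
  · simp [hx.eq, hfix x hx]
  · by_cases hxS : x ∈ S <;> simp [hS x hx, hxS, coord_eq]

lemma subsingleton_hMinus_of_coord [IsAddTorsionFree G] (hs : Involutive s)
    (hf : ∀ a x, e (f a) x = e a (s x)) : Subsingleton (hMinus f) := by
  rw [subsingleton_hMinus_iff, ← kerP_neg, ← imP_neg]
  intro a ha
  rw [mem_kerP] at ha
  have hf_neg (b : M) (x : X) : e ((-f) b) x = (-AddMonoidHom.id G) (e b (s x)) := by simp [hf]
  refine mem_imP_of_coord_eq_zero_of_isFixedPt hs hf_neg ha fun x hx ↦ ?_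
  have coord_neg : -e a x = e a x := by simpa [hx.eq, ha] using (hf_neg a x).symm
  exact self_eq_neg.mp coord_neg.symm

lemma nontrivial_hPlus_iff_of_coord (hG : ∃ g : G, ¬ Even g) (hs : Involutive s)
    (hf : ∀ a x, e (f a) x = e a (s x)) :
    Nontrivial (hPlus f) ↔ ∃ x, IsFixedPt s x := by
  classical
  rw [← not_subsingleton_iff_nontrivial, subsingleton_hPlus_iff, not_iff_comm]
  constructor
  · intro hfree a ha
    exact mem_imP_of_coord_eq_zero_of_isFixedPt (φ := .id G) hs hf (mem_kerP.mp ha)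
      fun x hx ↦ (hfree ⟨x, hx⟩).elim
  · rintro hle ⟨x, hx⟩
    obtain ⟨g, hg⟩ := hG
    have single_mem : e.symm (Finsupp.single x g) ∈ kerP f := by
      refine mem_kerP.mpr (e.injective (Finsupp.ext fun y ↦ ?_))
      rw [hf, AddEquiv.apply_symm_apply, ← Finsupp.single_apply_left hs.injective, hx.eq, hs y]
    obtain ⟨b, hb⟩ := hle single_mem
    refine hg ⟨e b x, ?_⟩
    simpa [hf, hx.eq] using (DFunLike.congr_fun (congrArg e hb) x).symm

end PermutationModule

section TwistedMonomials

lemma twSwap_involutive : Function.Involutive (twSwap : TwGens I J → TwGens I J) := by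
  rintro (⟨i, b⟩ | j) <;> simp [twSwap]

lemma even_iff_intCast_zmod_two_eq_zero {v : K → ℤ} :
    Even v ↔ (fun k ↦ (v k : ZMod 2)) = 0 := by
  simp only [funext_iff, Pi.zero_apply, ZMod.intCast_eq_zero_iff_even, Even, Pi.add_apply,
    Classical.skolem]

variable [Fintype I] [Fintype J] (c : I → K → ℤ) (m : J → K → ℤ) (t : K → ℤ)

lemma twTwist_comp_twSwap (p : TwGens I J → ℕ) : twTwist c m (p ∘ twSwap) = twTwist c m p := by
  funext k
  simp [twTwist, twSwap, add_comm]

lemma intCast_zmod_two_twTwist {p : TwGens I J → ℕ} (hp : p ∘ twSwap = p) :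
    (fun k ↦ (twTwist c m p k : ZMod 2)) =
      ∑ j, (p (Sum.inr j) : ZMod 2) • fun k ↦ (m j k : ZMod 2) := by
  have hp' (i : I) : p (Sum.inl (i, true)) = p (Sum.inl (i, false)) := congrFun hp (.inl (i, false))
  funext k
  simp [twTwist, hp', CharTwo.add_self_eq_zero]

/-- The action of the twisted involution `⋆_t` on exponents of monomials. -/
def twStarTMon (x : TwMon I J K) : TwMon I J K := twStarMon c m x + (0, t)

lemma twStarTMon_apply (p : TwGens I J → ℕ) (g : K → ℤ) :
    twStarTMon c m t (p, g) = (p ∘ twSwap, -g + (twTwist c m p + t)) :=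
  Prod.ext (add_zero _) (add_assoc _ _ _)

lemma twStarTMon_involutive : Function.Involutive (twStarTMon c m t) := by
  rintro ⟨p, g⟩
  simp only [twStarTMon_apply, twTwist_comp_twSwap, Function.comp_assoc,
    twSwap_involutive.comp_self, Function.comp_id, Prod.mk.injEq, true_and]
  abel

lemma exists_isFixedPt_twStarTMon_iff_exists_even :
    (∃ x, Function.IsFixedPt (twStarTMon c m t) x) ↔
      ∃ p : TwGens I J → ℕ, p ∘ twSwap = p ∧ Even (twTwist c m p + t) := by
  simp only [Prod.exists, Function.IsFixedPt, twStarTMon_apply, Prod.mk.injEq, exists_and_left,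
    neg_add_eq_iff_eq_add, Even]

lemma exists_isFixedPt_twStarTMon_iff_mem_span :
    (∃ x, Function.IsFixedPt (twStarTMon c m t) x) ↔
      (fun k ↦ (t k : ZMod 2)) ∈
        Submodule.span (ZMod 2) (Set.range fun j : J ↦ fun k ↦ (m j k : ZMod 2)) := by
  have even_iff {p : TwGens I J → ℕ} (hp : p ∘ twSwap = p) : Even (twTwist c m p + t) ↔
      ∑ j, (p (Sum.inr j) : ZMod 2) • (fun k ↦ (m j k : ZMod 2)) = fun k ↦ (t k : ZMod 2) := by
    rw [even_iff_intCast_zmod_two_eq_zero, ← intCast_zmod_two_twTwist c m hp]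
    simp only [funext_iff, Pi.add_apply, Int.cast_add, Pi.zero_apply, CharTwo.add_eq_zero]
  rw [exists_isFixedPt_twStarTMon_iff_exists_even, Submodule.mem_span_range_iff_exists_fun]
  constructor
  · rintro ⟨p, hp, heven⟩
    exact ⟨fun j ↦ p (Sum.inr j), (even_iff hp).mp heven⟩
  · rintro ⟨q, hq⟩
    let p : TwGens I J → ℕ := Sum.elim 0 fun j ↦ (q j).val
    have hp : p ∘ twSwap = p := by
      funext x
      rcases x with ⟨i, b⟩ | j <;> rfl
    exact ⟨p, hp, (even_iff hp).mpr (by simpa [p] using hq)⟩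

end TwistedMonomials

section TwistedPolynomialRing

variable [Fintype I] [Fintype J] (c : I → K → ℤ) (m : J → K → ℤ) (t : K → ℤ)

lemma twStarT_single (x : TwMon I J K) (r : ℤ) :
    twStarT c m t (AddMonoidAlgebra.single x r) =
      AddMonoidAlgebra.single (twStarTMon c m t x) r := by
  simp [twStarT, twStar, twX, twStarTMon, AddMonoidAlgebra.single_mul_single]

lemma coeff_twStarT (a : TwPolyRing I J K) (x : TwMon I J K) :
    (twStarT c m t a).coeff x = a.coeff (twStarTMon c m t x) := by
  classical
  induction a using AddMonoidAlgebra.induction_linear with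
  | zero => simp
  | add a b ha hb => simp [ha, hb]
  | single y r =>
    rw [twStarT_single]
    simp only [AddMonoidAlgebra.coeff_single, Finsupp.single_apply,
      (twStarTMon_involutive c m t).eq_iff]

lemma subsingleton_hMinus_twStarT : Subsingleton (hMinus (twStarT c m t)) :=
  subsingleton_hMinus_of_coord (e := AddMonoidAlgebra.coeffAddEquiv)
    (twStarTMon_involutive c m t) (coeff_twStarT c m t)

lemma nontrivial_hPlus_twStarT_iff :
    Nontrivial (hPlus (twStarT c m t)) ↔ ∃ x, Function.IsFixedPt (twStarTMon c m t) x :=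
  nontrivial_hPlus_iff_of_coord (e := AddMonoidAlgebra.coeffAddEquiv) ⟨1, Int.not_even_one⟩
    (twStarTMon_involutive c m t) (coeff_twStarT c m t)

end TwistedPolynomialRing

theorem statement6_general {I J K : Type} [Fintype I] [Fintype J]
    (c : I → K → ℤ) (m : J → K → ℤ) (t : K → ℤ) :
    ((∃ z : hPlus (twStarT c m t), z ≠ 0) ∨ (∃ z : hMinus (twStarT c m t), z ≠ 0)) ↔
      (fun k => ((t k : ZMod 2))) ∈
        Submodule.span (ZMod 2) (Set.range fun j : J => fun k => ((m j k : ZMod 2))) := by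
  have hMinus_trivial : ¬ ∃ z : hMinus (twStarT c m t), z ≠ 0 := by
    have := subsingleton_hMinus_twStarT c m t
    exact fun ⟨z, hz⟩ ↦ hz (Subsingleton.elim z 0)
  rw [or_iff_left hMinus_trivial, ← nontrivial_iff_exists_ne, nontrivial_hPlus_twStarT_iff,
    exists_isFixedPt_twStarTMon_iff_mem_span]

/-- For every `t ∈ ℤ^K`, the twisted Tate cohomology
`h⁺(A, x^t) ⊕ h⁻(A, x^t)` of the twisted polynomial ring `(A,⋆)` is non-zero if and only
if the mod-2 reduction `t̄ ∈ (ℤ/2)^K` lies in the `𝔽₂`-linear span of the reductions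
`m̄ʲ` of the twist vectors of the self-dual generators `μ_j`. -/
theorem statement6 {I J K : Type} [Fintype I] [Fintype J] [Fintype K]
    (c : I → K → ℤ) (m : J → K → ℤ) (t : K → ℤ) :
    ((∃ z : hPlus (twStarT c m t), z ≠ 0) ∨ (∃ z : hMinus (twStarT c m t), z ≠ 0)) ↔
      (fun k => ((t k : ZMod 2))) ∈
        Submodule.span (ZMod 2) (Set.range fun j : J => fun k => ((m j k : ZMod 2))) :=
  statement6_general c m t
end
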